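/- arXiv:0806.1022 — 3 statements merged into one kernel-verified Lean document; each statement's English description precedes it below -/
import Mathlib

section
/- Let p : 𝔅 → G be an upper semicontinuous Banach bundle over a locally compact Hausdorff space G, let φ₁, φ₂ ∈ C_c(G) be nonnegative, and let h ∈ Γ_c(G;𝔅) satisfy ‖h(x)‖ ≤ φ₁(x) + φ₂(x) for all x ∈ G. Define σ_i(x) = φ_i(x)/(φ₁(x)+φ₂(x)) if φ₁(x)+φ₂(x) > 0 and σ_i(x) = 0 otherwise (i = 1,2), and set h_i(x) := σ_i(x)·h(x). Then h₁ and h₂ are continuous compactly supported sections of 𝔅, h = h₁ + h₂, and ‖h_i(x)‖ ≤ φ_i(x) for all x ∈ G and i = 1,2. -/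
open MeasureTheory Filter Topology Set

/-- An upper semicontinuous Banach bundle over a topological space `X`, with fibres
`Fib x` (each a complex Banach space), total space `(x : X) × Fib x` and bundle
projection `Sigma.fst`.  The axioms are (B1)–(B4) of the paper, together with the
standing assumption that the bundle has enough sections. -/
structure USCBanachBundle (X : Type) [TopologicalSpace X] (Fib : X → Type)
    [∀ x, NormedAddCommGroup (Fib x)] [∀ x, NormedSpace ℂ (Fib x)]
    [∀ x, CompleteSpace (Fib x)] : Type where
  /-- the topology on the total space `Σ x, Fib x` -/
  topTotal : TopologicalSpace ((x : X) × Fib x)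
  /-- the projection is continuous -/
  continuous_proj : @Continuous ((x : X) × Fib x) X topTotal inferInstance
    fun b => b.1
  /-- the projection is an open map -/
  isOpenMap_proj : @IsOpenMap ((x : X) × Fib x) X topTotal inferInstance
    fun b => b.1
  /-- (B1): the norm is upper semicontinuous on the total space -/
  isOpen_norm_lt : ∀ r : ℝ, @IsOpen ((x : X) × Fib x) topTotal { b | ‖b.2‖ < r }
  /-- (B2): addition is continuous on pairs lying in a common fibre -/
  continuous_add :
    @Continuous { q : ((x : X) × Fib x) × ((x : X) × Fib x) // q.1.1 = q.2.1 }
      ((x : X) × Fib x)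
      (@instTopologicalSpaceSubtype _ _
        (@instTopologicalSpaceProd _ _ topTotal topTotal))
      topTotal
      (fun q => ⟨q.1.1.1, q.1.1.2 + cast (congrArg Fib q.2.symm) q.1.2.2⟩)
  /-- (B3): scalar multiplication is continuous -/
  continuous_smul : ∀ c : ℂ,
    @Continuous ((x : X) × Fib x) ((x : X) × Fib x) topTotal topTotal
      fun b => ⟨b.1, c • b.2⟩
  /-- (B4): if `p (a i) → x` and `‖a i‖ → 0` then `a i → 0ₓ` (stated for filters,
  which is equivalent to the statement for nets) -/
  tendsto_zero : ∀ {ι : Type} (l : Filter ι) (a : ι → (x : X) × Fib x) (x : X),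
    Filter.Tendsto (fun i => (a i).1) l (nhds x) →
    Filter.Tendsto (fun i => ‖(a i).2‖) l (nhds (0 : ℝ)) →
    Filter.Tendsto a l (@nhds _ topTotal (⟨x, 0⟩ : (x : X) × Fib x))
  /-- the bundle has enough sections -/
  enough_sections : ∀ (x : X) (v : Fib x), ∃ f : ∀ y, Fib y,
    (@Continuous X ((x : X) × Fib x) inferInstance topTotal fun y => ⟨y, f y⟩) ∧
      f x = v

namespace USCBanachBundle

variable {X : Type} [TopologicalSpace X] {Fib : X → Type}
  [∀ x, NormedAddCommGroup (Fib x)] [∀ x, NormedSpace ℂ (Fib x)]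
  [∀ x, CompleteSpace (Fib x)]

/-- `f` is a continuous (global) section of the bundle `B`. -/
def IsContSection (B : USCBanachBundle X Fib) (f : ∀ x, Fib x) : Prop :=
  @Continuous X ((x : X) × Fib x) inferInstance B.topTotal fun x => ⟨x, f x⟩

/-- membership in `Γ_c(X;𝔅)`: continuous compactly supported sections. -/
def MemGammaC (B : USCBanachBundle X Fib) (f : ∀ x, Fib x) : Prop :=
  B.IsContSection f ∧ ∃ K : Set X, IsCompact K ∧ ∀ x ∉ K, f x = 0

/-- membership in `Γ₀(X;𝔅)`: continuous sections vanishing at infinity. -/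
def MemGammaZero (B : USCBanachBundle X Fib) (f : ∀ x, Fib x) : Prop :=
  B.IsContSection f ∧ ∀ ε : ℝ, 0 < ε → IsCompact { x | ε ≤ ‖f x‖ }

/-- The Banach space `Γ₀(X;𝔅)` is separable: there is a countable set of sections in
`Γ₀` which is dense for the supremum norm. -/
def SeparableGammaZero (B : USCBanachBundle X Fib) : Prop :=
  ∃ D : Set (∀ x, Fib x), D.Countable ∧ (∀ g ∈ D, B.MemGammaZero g) ∧
    ∀ f, B.MemGammaZero f → ∀ ε : ℝ, 0 < ε → ∃ g ∈ D, ∀ x, ‖f x - g x‖ < ε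

/-- uniform convergence of a sequence of sections to a section. -/
def UnifTendsto (B : USCBanachBundle X Fib) (F : ℕ → ∀ x, Fib x)
    (f : ∀ x, Fib x) : Prop :=
  ∀ ε : ℝ, 0 < ε → ∃ N : ℕ, ∀ n ≥ N, ∀ x, ‖F n x - f x‖ < ε

/-- continuity of `ν` in the inductive limit topology: `ν fₙ → ν f` whenever `fₙ → f`
uniformly with all supports contained in a fixed compact set. -/
def ILTContinuous (B : USCBanachBundle X Fib) (ν : (∀ x, Fib x) → ℂ) : Prop :=
  ∀ (F : ℕ → ∀ x, Fib x) (f : ∀ x, Fib x) (K : Set X),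
    (∀ n, B.MemGammaC (F n)) → B.MemGammaC f → IsCompact K →
    (∀ n, ∀ x ∉ K, F n x = 0) → B.UnifTendsto F f →
    Filter.Tendsto (fun n => ν (F n)) Filter.atTop (nhds (ν f))

/-- a generalized Radon measure on the bundle `B`: a linear functional on
`Γ_c(X;𝔅)` which is continuous in the inductive limit topology. -/
def IsGRM (B : USCBanachBundle X Fib) (ν : (∀ x, Fib x) → ℂ) : Prop :=
  (∀ f g, B.MemGammaC f → B.MemGammaC g →
    ν (fun x => f x + g x) = ν f + ν g) ∧
  (∀ (c : ℂ) (f), B.MemGammaC f → ν (fun x => c • f x) = c * ν f) ∧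
  B.ILTContinuous ν

/-- `μ` is the total variation `|ν|` of the generalized Radon measure `ν`: a Radon
measure (Borel measure, finite on compacts) such that for every nonnegative
`φ ∈ C_c(X)`, `∫ φ dμ = sup { |ν f| : f ∈ Γ_c(X;𝔅), ‖f x‖ ≤ φ x for all x }`. -/
def IsTotalVariation [MeasurableSpace X] (B : USCBanachBundle X Fib)
    (ν : (∀ x, Fib x) → ℂ) (μ : Measure X) : Prop :=
  (∀ K : Set X, IsCompact K → μ K < ⊤) ∧
  ∀ φ : X → ℝ, Continuous φ → HasCompactSupport φ → (∀ x, 0 ≤ φ x) →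
    ∫ x, φ x ∂μ =
      sSup { r : ℝ | ∃ f, B.MemGammaC f ∧ (∀ x, ‖f x‖ ≤ φ x) ∧ r = ‖ν f‖ }

/-- membership in `Σ_c(X;𝔅)`: bounded sections which are pointwise limits (in the
topology of the total space) of a uniformly bounded sequence in `Γ_c(X;𝔅)` whose
supports are contained in a fixed compact set. -/
def MemSigmaC (B : USCBanachBundle X Fib) (f : ∀ x, Fib x) : Prop :=
  (∃ M : ℝ, ∀ x, ‖f x‖ ≤ M) ∧
  ∃ (F : ℕ → ∀ x, Fib x) (K : Set X) (M : ℝ),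
    (∀ n, B.MemGammaC (F n)) ∧ (∀ n x, ‖F n x‖ ≤ M) ∧ IsCompact K ∧
    (∀ n, ∀ x ∉ K, F n x = 0) ∧
    ∀ x, Filter.Tendsto (fun n => (⟨x, F n x⟩ : (x : X) × Fib x)) Filter.atTop
      (@nhds _ B.topTotal (⟨x, f x⟩ : (x : X) × Fib x))

end USCBanachBundle

/-!
Where `φ₁ + φ₂ > 0`, the weight `φᵢ / (φ₁ + φ₂)` is continuous, and scalar multiplication is
jointly continuous on the total space: in `c • a = c₀ • a + (c - c₀) • a` the second summand tends
to zero by (B4), because the norm is locally bounded by (B1). Where `φ₁ + φ₂` vanishes the weight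
may be discontinuous, but `‖hᵢ‖ ≤ φᵢ` forces `hᵢ` to tend to zero there, and (B4) applies again.
-/

namespace USCBanachBundle

variable {X : Type} [TopologicalSpace X] {Fib : X → Type}
  [∀ x, NormedAddCommGroup (Fib x)] [∀ x, NormedSpace ℂ (Fib x)]
  [∀ x, CompleteSpace (Fib x)] {B : USCBanachBundle X Fib}

/-- The total space of `B` with the bundle topology. It is a type synonym because the sigma type
`(x : X) × Fib x` already carries the disjoint union topology as an instance. -/
def TotalSpace (_B : USCBanachBundle X Fib) : Type := (x : X) × Fib x

instance : TopologicalSpace B.TotalSpace := B.topTotal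

/-- The vector `v` of the fibre over `x`, as a point of the total space. -/
def point (B : USCBanachBundle X Fib) (x : X) (v : Fib x) : B.TotalSpace := ⟨x, v⟩

lemma isContSection_iff_continuousAt {f : ∀ x, Fib x} :
    B.IsContSection f ↔ ∀ x, ContinuousAt (fun y => B.point y (f y)) x :=
  continuous_iff_continuousAt (f := fun y => B.point y (f y))

section Tendsto

variable {ι : Type*} {l : Filter ι} {p : ι → X} {a b : ∀ i, Fib (p i)} {x : X} {u v : Fib x}

lemma tendsto_proj (ha : Tendsto (fun i => B.point (p i) (a i)) l (𝓝 (B.point x u))) :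
    Tendsto p l (𝓝 x) :=
  have hproj : Continuous (fun w : B.TotalSpace => w.1) := B.continuous_proj
  (hproj.tendsto (B.point x u)).comp ha

lemma eventually_norm_lt (ha : Tendsto (fun i => B.point (p i) (a i)) l (𝓝 (B.point x u)))
    {r : ℝ} (hr : ‖u‖ < r) : ∀ᶠ i in l, ‖a i‖ < r :=
  have hopen : IsOpen {w : B.TotalSpace | ‖w.2‖ < r} := B.isOpen_norm_lt r
  ha.eventually (hopen.mem_nhds hr)

lemma tendsto_add (ha : Tendsto (fun i => B.point (p i) (a i)) l (𝓝 (B.point x u)))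
    (hb : Tendsto (fun i => B.point (p i) (b i)) l (𝓝 (B.point x v))) :
    Tendsto (fun i => B.point (p i) (a i + b i)) l (𝓝 (B.point x (u + v))) := by
  let s : Set (B.TotalSpace × B.TotalSpace) := {q | q.1.1 = q.2.1}
  have hpair : Tendsto (fun i => (⟨(B.point (p i) (a i), B.point (p i) (b i)), rfl⟩ : s)) l
      (𝓝 ⟨(B.point x u, B.point x v), rfl⟩) :=
    tendsto_subtype_rng.2 (ha.prodMk_nhds hb)
  have hadd : Continuous fun q : s =>
      B.point q.1.1.1 (q.1.1.2 + cast (congrArg Fib q.2.symm) q.1.2.2) := B.continuous_add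
  exact (hadd.tendsto _).comp hpair

lemma tendsto_const_smul (c : ℂ)
    (ha : Tendsto (fun i => B.point (p i) (a i)) l (𝓝 (B.point x u))) :
    Tendsto (fun i => B.point (p i) (c • a i)) l (𝓝 (B.point x (c • u))) :=
  have hsmul : Continuous fun w : B.TotalSpace => B.point w.1 (c • w.2) := B.continuous_smul c
  (hsmul.tendsto (B.point x u)).comp ha

-- (B4) quantifies over index types in `Type` only; passing to the image filter on the total
-- space removes this restriction.
lemma tendsto_point_zero (hp : Tendsto p l (𝓝 x)) (ha : Tendsto (fun i => ‖a i‖) l (𝓝 0)) :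
    Tendsto (fun i => B.point (p i) (a i)) l (𝓝 (B.point x 0)) :=
  tendsto_map'_iff.1 <|
    B.tendsto_zero (l.map fun i => B.point (p i) (a i)) id x (tendsto_map' hp) (tendsto_map' ha)

lemma tendsto_smul {c : ι → ℂ} {c₀ : ℂ} (hc : Tendsto c l (𝓝 c₀))
    (ha : Tendsto (fun i => B.point (p i) (a i)) l (𝓝 (B.point x u))) :
    Tendsto (fun i => B.point (p i) (c i • a i)) l (𝓝 (B.point x (c₀ • u))) := by
  have hbdd : IsBoundedUnder (· ≤ ·) l (fun i => ‖‖a i‖‖) := by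
    simp only [norm_norm]
    exact isBoundedUnder_of_eventually_le
      ((eventually_norm_lt ha (lt_add_one ‖u‖)).mono fun _ => le_of_lt)
  have hdiff : Tendsto (fun i => ‖c i - c₀‖) l (𝓝 0) := tendsto_iff_norm_sub_tendsto_zero.1 hc
  have hrest : Tendsto (fun i => B.point (p i) ((c i - c₀) • a i)) l (𝓝 (B.point x 0)) :=
    tendsto_point_zero (tendsto_proj ha) <| by
      simpa only [norm_smul] using hdiff.zero_mul_isBoundedUnder_le hbdd
  simpa only [← add_smul, add_sub_cancel, add_zero] using
    tendsto_add (tendsto_const_smul c₀ ha) hrest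

end Tendsto

section Quotient

variable {𝕜 E : Type*} [NormedField 𝕜] [NormedAddCommGroup E] [NormedSpace 𝕜 E]

lemma norm_div_smul_le (a : 𝕜) {s : 𝕜} {v : E} (hv : ‖v‖ ≤ ‖s‖) : ‖(a / s) • v‖ ≤ ‖a‖ :=
  calc ‖(a / s) • v‖ = ‖a‖ * (‖v‖ / ‖s‖) := by rw [norm_smul, norm_div, div_mul_comm, mul_comm]
    _ ≤ ‖a‖ := mul_le_of_le_one_right (norm_nonneg a) (div_le_one_of_le₀ hv (norm_nonneg s))

lemma div_smul_add_div_smul {a b : 𝕜} {v : E} (hv : ‖v‖ ≤ ‖a + b‖) :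
    (a / (a + b)) • v + (b / (a + b)) • v = v := by
  rw [← add_smul, ← add_div]
  by_cases hab : a + b = 0
  · have hv0 : v = 0 := by simpa only [hab, norm_zero, norm_le_zero_iff] using hv
    rw [hv0, smul_zero]
  · rw [div_self hab, one_smul]

end Quotient

section DivSMul

variable {a s : X → ℂ} {h : ∀ x, Fib x}

lemma IsContSection.div_smul (hh : B.IsContSection h) (ha : Continuous a) (hs : Continuous s)
    (has : ∀ x, s x = 0 → a x = 0) (hle : ∀ x, ‖h x‖ ≤ ‖s x‖) :
    B.IsContSection fun x => (a x / s x) • h x := by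
  rw [isContSection_iff_continuousAt] at hh ⊢
  intro x
  by_cases hsx : s x = 0
  · have hnorm : Tendsto (fun y => ‖(a y / s y) • h y‖) (𝓝 x) (𝓝 0) :=
      squeeze_zero (fun _ => norm_nonneg _) (fun y => norm_div_smul_le (a y) (hle y)) <| by
        simpa only [has x hsx, norm_zero] using ha.norm.tendsto x
    simpa only [ContinuousAt, hsx, div_zero, zero_smul] using
      tendsto_point_zero (B := B) (p := fun y => y) tendsto_id hnorm
  · exact tendsto_smul (ha.continuousAt.div hs.continuousAt hsx) (hh x)

lemma MemGammaC.div_smul (hh : B.MemGammaC h) (ha : Continuous a) (hs : Continuous s)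
    (has : ∀ x, s x = 0 → a x = 0) (hle : ∀ x, ‖h x‖ ≤ ‖s x‖) :
    B.MemGammaC fun x => (a x / s x) • h x := by
  obtain ⟨hcont, K, hK, hzero⟩ := hh
  exact ⟨hcont.div_smul ha hs has hle, K, hK, fun x hx => by simp only [hzero x hx, smul_zero]⟩

end DivSMul

theorem split_dominated_section_general (φ₁ φ₂ : X → ℝ)
    (hφ₁c : Continuous φ₁) (hφ₁0 : ∀ x, 0 ≤ φ₁ x) (hφ₂c : Continuous φ₂) (hφ₂0 : ∀ x, 0 ≤ φ₂ x)
    (h : ∀ x, Fib x) (hh : B.MemGammaC h) (hle : ∀ x, ‖h x‖ ≤ φ₁ x + φ₂ x) (h₁ h₂ : ∀ x, Fib x)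
    (hd₁ : ∀ x, h₁ x = ((φ₁ x / (φ₁ x + φ₂ x) : ℝ) : ℂ) • h x)
    (hd₂ : ∀ x, h₂ x = ((φ₂ x / (φ₁ x + φ₂ x) : ℝ) : ℂ) • h x) :
    B.MemGammaC h₁ ∧ B.MemGammaC h₂ ∧ (∀ x, h x = h₁ x + h₂ x) ∧
      (∀ x, ‖h₁ x‖ ≤ φ₁ x) ∧ (∀ x, ‖h₂ x‖ ≤ φ₂ x) := by
  simp only [Complex.ofReal_div, Complex.ofReal_add] at hd₁ hd₂
  obtain rfl := funext hd₁
  obtain rfl := funext hd₂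
  have hc₁ : Continuous fun x => (φ₁ x : ℂ) := Complex.continuous_ofReal.comp hφ₁c
  have hc₂ : Continuous fun x => (φ₂ x : ℂ) := Complex.continuous_ofReal.comp hφ₂c
  have hzero (x : X) (hx : (φ₁ x + φ₂ x : ℂ) = 0) : (φ₁ x : ℂ) = 0 ∧ (φ₂ x : ℂ) = 0 := by
    norm_cast at hx ⊢
    exact (add_eq_zero_iff_of_nonneg (hφ₁0 x) (hφ₂0 x)).1 hx
  have hdom (x : X) : ‖h x‖ ≤ ‖(φ₁ x + φ₂ x : ℂ)‖ := by
    rw [← Complex.ofReal_add, Complex.norm_of_nonneg (add_nonneg (hφ₁0 x) (hφ₂0 x))]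
    exact hle x
  refine ⟨hh.div_smul hc₁ (hc₁.add hc₂) (fun x hx => (hzero x hx).1) hdom,
    hh.div_smul hc₂ (hc₁.add hc₂) (fun x hx => (hzero x hx).2) hdom,
    fun x => (div_smul_add_div_smul (hdom x)).symm, fun x => ?_, fun x => ?_⟩
  · simpa only [Complex.norm_of_nonneg (hφ₁0 x)] using norm_div_smul_le (φ₁ x : ℂ) (hdom x)
  · simpa only [Complex.norm_of_nonneg (hφ₂0 x)] using norm_div_smul_le (φ₂ x : ℂ) (hdom x)

end USCBanachBundle

/-- from the proof of Lemma 3.1: splitting a section dominated by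
`φ₁ + φ₂`.  Here `σᵢ x = φᵢ x / (φ₁ x + φ₂ x)` when `φ₁ x + φ₂ x > 0` and `0`
otherwise (recall that in Lean division by zero is zero, which, since `φ₁, φ₂ ≥ 0`,
gives exactly this function), and `hᵢ = σᵢ · h`. -/
theorem USCBanachBundle.split_dominated_section
    {G : Type} [TopologicalSpace G] [LocallyCompactSpace G] [T2Space G]
    {Fib : G → Type}
    [∀ x, NormedAddCommGroup (Fib x)] [∀ x, NormedSpace ℂ (Fib x)]
    [∀ x, CompleteSpace (Fib x)]
    (B : USCBanachBundle G Fib)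
    (φ₁ φ₂ : G → ℝ)
    (hφ₁c : Continuous φ₁) (hφ₁s : HasCompactSupport φ₁) (hφ₁0 : ∀ x, 0 ≤ φ₁ x)
    (hφ₂c : Continuous φ₂) (hφ₂s : HasCompactSupport φ₂) (hφ₂0 : ∀ x, 0 ≤ φ₂ x)
    (h : ∀ x, Fib x) (hh : B.MemGammaC h)
    (hle : ∀ x, ‖h x‖ ≤ φ₁ x + φ₂ x)
    (h₁ h₂ : ∀ x, Fib x)
    (hd₁ : ∀ x, h₁ x = ((φ₁ x / (φ₁ x + φ₂ x) : ℝ) : ℂ) • h x)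
    (hd₂ : ∀ x, h₂ x = ((φ₂ x / (φ₁ x + φ₂ x) : ℝ) : ℂ) • h x) :
    B.MemGammaC h₁ ∧ B.MemGammaC h₂ ∧ (∀ x, h x = h₁ x + h₂ x) ∧
      (∀ x, ‖h₁ x‖ ≤ φ₁ x) ∧ (∀ x, ‖h₂ x‖ ≤ φ₂ x) :=
  split_dominated_section_general φ₁ φ₂ hφ₁c hφ₁0 hφ₂c hφ₂0 h hh hle h₁ h₂ hd₁ hd₂
end

section
/- Let p : 𝔅 → G be an upper semicontinuous Banach bundle over a second countable locally compact Hausdorff space G such that the Banach space Γ₀(G;𝔅) is separable, and let ν be a generalized Radon measure on 𝔅 with total variation |ν|. Then for every x ∈ G there exists a continuous linear functional ε_x in the dual space B(x)* with ‖ε_x‖ ≤ 1 such that: (1) for each f ∈ Γ_c(G;𝔅), the function x ↦ ε_x(f(x)) is a bounded Borel function on G vanishing off a compact set; and (2) ν(f) = ∫_G ε_x(f(x)) d|ν|(x) for all f ∈ Γ_c(G;𝔅). -/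
open MeasureTheory Filter Topology Set

/-!
The total variation satisfies `‖ν f‖ ≤ ∫ ‖f‖ d|ν|`: by definition this holds with `‖f‖` replaced
by any `φ ∈ C_c` above it, and the integrals of such `φ` come arbitrarily close to `∫ ‖f‖ d|ν|`
because `‖f‖` is upper semicontinuous with compact support. Applied to the products `φ f`, this
bounds the functional `φ ↦ ν (φ f)` in `L²(|ν|)`, so it is integration against a density `h_f`,
and `|h_f| ≤ ‖f‖` almost everywhere.

The density is linear in `f` up to null sets. Along a countable uniformly dense family `g` in
`Γ_c` all the null sets can be discarded at once: for almost every `x`, every linear combination of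
the numbers `h_g x` is bounded by the norm of the same combination of the vectors `g x`. Hence
`g x ↦ h_g x` extends to a contractive functional `ε x` by Hahn–Banach. Density of the family
carries measurability of `ε x (f x)` and the identity `ε x (f x) = h_f x` over to all `f ∈ Γ_c`.
-/

open scoped ENNReal NNReal CompactlySupported
open TopologicalSpace

theorem exists_strongDual_comp_eq {𝕜 M E : Type*} [RCLike 𝕜] [AddCommGroup M] [Module 𝕜 M]
    [SeminormedAddCommGroup E] [NormedSpace 𝕜 E] (A : M →ₗ[𝕜] E) (L : M →ₗ[𝕜] 𝕜) {C : ℝ}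
    (hC : 0 ≤ C) (hL : ∀ m, ‖L m‖ ≤ C * ‖A m‖) :
    ∃ F : StrongDual 𝕜 E, ‖F‖ ≤ C ∧ ∀ m, F (A m) = L m := by
  have hLA (m : M) : L.compLeftInverse A ⟨A m, m, rfl⟩ = L m :=
    L.compLeftInverse_apply_of_bdd A ⟨C, hL⟩ m _ rfl
  obtain ⟨F, hF, hFn⟩ := exists_extension_norm_eq _ (L.compLeftInverse A)
  refine ⟨F, hFn.trans_le (ContinuousLinearMap.opNorm_le_bound _ hC ?_), fun m => ?_⟩
  · rintro ⟨_, m, rfl⟩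
    exact (congrArg norm (hLA m)).trans_le (hL m)
  · exact (hF ⟨A m, m, rfl⟩).trans (hLA m)

theorem ae_forall_norm_linearCombination_le {𝕜 α ι : Type*} {E F : α → Type*}
    [NormedField 𝕜] [SeparableSpace 𝕜] [MeasurableSpace α] {μ : Measure α} [Countable ι]
    [∀ x, SeminormedAddCommGroup (E x)] [∀ x, NormedSpace 𝕜 (E x)]
    [∀ x, SeminormedAddCommGroup (F x)] [∀ x, NormedSpace 𝕜 (F x)]
    {g : ι → ∀ x, E x} {h : ι → ∀ x, F x}
    (hle : ∀ c : ι →₀ 𝕜, ∀ᵐ x ∂μ,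
      ‖Finsupp.linearCombination 𝕜 (h · x) c‖ ≤ ‖Finsupp.linearCombination 𝕜 (g · x) c‖) :
    ∀ᵐ x ∂μ, ∀ c : ι →₀ 𝕜,
      ‖Finsupp.linearCombination 𝕜 (h · x) c‖ ≤ ‖Finsupp.linearCombination 𝕜 (g · x) c‖ := by
  -- Both sides are continuous in the coefficients, so a countable dense set of coefficients, hence
  -- a countable union of null sets, is enough.
  have hdense : ∀ᵐ x ∂μ, ∀ (s : Finset ι) (n : ℕ),
      ‖∑ i ∈ s, denseSeq (ι → 𝕜) n i • h i x‖ ≤ ‖∑ i ∈ s, denseSeq (ι → 𝕜) n i • g i x‖ := by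
    refine ae_all_iff.2 fun s => ae_all_iff.2 fun n => ?_
    simpa only [map_sum, Finsupp.linearCombination_single] using
      hle (∑ i ∈ s, Finsupp.single i (denseSeq (ι → 𝕜) n i))
  filter_upwards [hdense] with x hx c
  have hclosed : IsClosed {a : ι → 𝕜 |
      ‖∑ i ∈ c.support, a i • h i x‖ ≤ ‖∑ i ∈ c.support, a i • g i x‖} :=
    isClosed_le (by fun_prop) (by fun_prop)
  have hall : ∀ a : ι → 𝕜, ‖∑ i ∈ c.support, a i • h i x‖ ≤ ‖∑ i ∈ c.support, a i • g i x‖ :=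
    fun a => (denseRange_denseSeq (ι → 𝕜)).induction_on a hclosed (hx c.support)
  exact hall c

theorem exists_strongDual_ae_eq {𝕜 α ι : Type*} {E : α → Type*} [RCLike 𝕜] [MeasurableSpace α]
    {μ : Measure α} [Countable ι] [∀ x, SeminormedAddCommGroup (E x)]
    [∀ x, NormedSpace 𝕜 (E x)] {g : ι → ∀ x, E x} {h : ι → α → 𝕜} (hm : ∀ i, Measurable (h i))
    (hle : ∀ c : ι →₀ 𝕜, ∀ᵐ x ∂μ,
      ‖Finsupp.linearCombination 𝕜 (h · x) c‖ ≤ ‖Finsupp.linearCombination 𝕜 (g · x) c‖) :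
    ∃ ε : ∀ x, StrongDual 𝕜 (E x), (∀ x, ‖ε x‖ ≤ 1) ∧
      ∀ i, Measurable (fun x => ε x (g i x)) ∧ (fun x => ε x (g i x)) =ᵐ[μ] h i := by
  obtain ⟨S, hSμ, hS, hle⟩ := (ae_forall_norm_linearCombination_le hle).exists_measurable_mem
  have hfun (x : α) : ∃ F : StrongDual 𝕜 (E x), ‖F‖ ≤ 1 ∧
      ∀ i, F (g i x) = S.indicator (h i) x := by
    by_cases hx : x ∈ S
    · obtain ⟨F, hF, hFg⟩ := exists_strongDual_comp_eq (Finsupp.linearCombination 𝕜 (g · x))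
        (Finsupp.linearCombination 𝕜 (h · x)) zero_le_one (by simpa using hle x hx)
      exact ⟨F, hF, fun i => by simpa [hx] using hFg (Finsupp.single i 1)⟩
    · exact ⟨0, by simp, by simp [hx]⟩
  choose ε hε hεg using hfun
  refine ⟨ε, hε, fun i => ⟨?_, ?_⟩⟩
  · simpa only [hεg] using (hm i).indicator hS
  · filter_upwards [hSμ] with x hx
    simp [hεg, hx]

theorem measurable_of_forall_exists_dist_le {α β : Type*} [MeasurableSpace α]
    [PseudoMetricSpace β] [MeasurableSpace β] [BorelSpace β] {f : α → β}
    (hf : ∀ δ > 0, ∃ g : α → β, Measurable g ∧ ∀ x, dist (g x) (f x) ≤ δ) : Measurable f := by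
  choose g hg hgf using fun n : ℕ => hf _ (Nat.one_div_pos_of_nat (n := n) (α := ℝ))
  refine measurable_of_tendsto_metrizable hg (tendsto_pi_nhds.2 fun x => ?_)
  exact tendsto_iff_dist_tendsto_zero.2 (squeeze_zero (fun _ => dist_nonneg) (fun n => hgf n x)
    tendsto_one_div_add_atTop_nhds_zero_nat)

theorem measurable_strongDual_apply_of_forall_exists {𝕜 α : Type*} {E : α → Type*} [RCLike 𝕜]
    [MeasurableSpace α] [∀ x, SeminormedAddCommGroup (E x)] [∀ x, NormedSpace 𝕜 (E x)]
    {ε : ∀ x, StrongDual 𝕜 (E x)} (hε : ∀ x, ‖ε x‖ ≤ 1) {D : Set (∀ x, E x)}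
    (hD : ∀ g ∈ D, Measurable fun x => ε x (g x)) {f : ∀ x, E x}
    (hf : ∀ δ > 0, ∃ g ∈ D, ∀ x, ‖f x - g x‖ < δ) : Measurable fun x => ε x (f x) := by
  refine measurable_of_forall_exists_dist_le fun δ hδ => ?_
  obtain ⟨g, hg, hfg⟩ := hf δ hδ
  refine ⟨_, hD g hg, fun x => ?_⟩
  rw [dist_comm, dist_eq_norm, ← map_sub]
  exact ((ε x).le_of_opNorm_le (hε x) _).trans (by simpa using (hfg x).le)

theorem ae_eq_of_forall_ae_dist_le {α β : Type*} [MeasurableSpace α] {μ : Measure α}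
    [MetricSpace β] {f g : α → β} (hfg : ∀ δ > 0, ∀ᵐ x ∂μ, dist (f x) (g x) ≤ δ) :
    f =ᵐ[μ] g := by
  have hn := ae_all_iff.2 fun n : ℕ => hfg _ (Nat.one_div_pos_of_nat (n := n) (α := ℝ))
  filter_upwards [hn] with x hx
  exact dist_le_zero.1 (ge_of_tendsto' tendsto_one_div_add_atTop_nhds_zero_nat hx)

section Insertion

variable {X : Type*} [TopologicalSpace X] [LocallyCompactSpace X] [R1Space X]

theorem exists_compactlySupported_between {K : Set X} (hK : IsCompact K) {g u : X → ℝ≥0∞}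
    (hg : UpperSemicontinuousOn g K) (hu : LowerSemicontinuous u) (hlt : ∀ x ∈ K, g x < u x) :
    ∃ φ : C_c(X, ℝ≥0), (∀ x ∈ K, g x ≤ φ x) ∧ ∀ x, φ x ≤ u x := by
  refine hK.induction_on (p := fun s => ∃ φ : C_c(X, ℝ≥0), (∀ x ∈ s, g x ≤ φ x) ∧ ∀ x, φ x ≤ u x)
    ⟨0, by simp⟩ (fun s t hst ⟨φ, hφ, hφu⟩ => ⟨φ, fun x hx => hφ x (hst hx), hφu⟩) ?_ ?_
  · rintro s t ⟨φ, hφ, hφu⟩ ⟨ψ, hψ, hψu⟩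
    refine ⟨φ ⊔ ψ, fun x hx => ?_, fun x => ?_⟩
    · rcases hx with hx | hx
      · exact (hφ x hx).trans (by simp)
      · exact (hψ x hx).trans (by simp)
    · simp [hφu x, hψu x]
  · intro x hx
    obtain ⟨c, hgc, hcu⟩ := ENNReal.lt_iff_exists_nnreal_btwn.1 (hlt x hx)
    obtain ⟨V, hV, hxV, hVu⟩ := exists_compact_subset (hu.isOpen_preimage c) hcu
    obtain ⟨ψ, hψV, hψc, hψu, hψ⟩ :=
      exists_continuousMap_one_of_isCompact_subset_isOpen hV (hu.isOpen_preimage c) hVu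
    let φ : C_c(X, ℝ≥0) := c • CompactlySupportedContinuousMap.nnrealPart ⟨ψ, hψc⟩
    have hφ (y : X) : φ y = c * (ψ y).toNNReal := rfl
    have hVx : V ∩ {y | g y < c} ∈ 𝓝[K] x :=
      inter_mem (mem_nhdsWithin_of_mem_nhds (mem_interior_iff_mem_nhds.1 hxV)) (hg x hx c hgc)
    refine ⟨_, hVx, φ, fun y ⟨hyV, hy⟩ => ?_, fun y => ?_⟩
    · simpa [hφ, hψV hyV] using le_of_lt hy
    · by_cases hy : y ∈ tsupport ψ
      · refine le_trans ?_ (le_of_lt (hψu hy))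
        exact_mod_cast mul_le_of_le_one_right' (Real.toNNReal_le_one.2 (hψ y).2)
      · simp [hφ, image_eq_zero_of_notMem_tsupport hy]

theorem exists_compactlySupported_ge_lintegral_le [MeasurableSpace X] [BorelSpace X]
    {μ : Measure X} [μ.Regular] {g : X → ℝ≥0∞} (hg : UpperSemicontinuous g)
    (hg_fin : ∀ x, g x ≠ ∞) (hgc : HasCompactSupport g) {ε : ℝ≥0∞} (hε : ε ≠ 0) :
    ∃ φ : C_c(X, ℝ≥0), (∀ x, g x ≤ φ x) ∧ ∫⁻ x, φ x ∂μ ≤ ∫⁻ x, g x ∂μ + ε := by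
  have hK : μ (tsupport g) ≠ ∞ := hgc.isCompact.measure_lt_top.ne
  have hε2 : ε / 2 ≠ 0 := by simpa
  obtain ⟨δ, hδ, hδK⟩ := ENNReal.exists_nnreal_pos_mul_lt hK hε2
  -- Vitali–Carathéodory is applied to `g + δ` on the support, to leave room for continuity.
  obtain ⟨u, hgu, hu, hu_le⟩ := exists_le_lowerSemicontinuous_lintegral_ge μ
    (fun x => g x + (tsupport g).indicator (fun _ => (δ : ℝ≥0∞)) x)
    (hg.measurable.add (measurable_const.indicator (isClosed_tsupport g).measurableSet)) hε2
  have hlt : ∀ x ∈ tsupport g, g x < u x := fun x hx =>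
    (ENNReal.lt_add_right (hg_fin x) (ENNReal.coe_ne_zero.2 hδ.ne')).trans_le
      (by simpa [hx] using hgu x)
  obtain ⟨φ, hgφ, hφu⟩ :=
    exists_compactlySupported_between hgc.isCompact (hg.upperSemicontinuousOn _) hu hlt
  refine ⟨φ, fun x => ?_, ?_⟩
  · by_cases hx : x ∈ tsupport g
    · exact hgφ x hx
    · simp [image_eq_zero_of_notMem_tsupport hx]
  · calc ∫⁻ x, φ x ∂μ ≤ ∫⁻ x, u x ∂μ := lintegral_mono hφu
      _ ≤ ∫⁻ x, g x ∂μ + δ * μ (tsupport g) + ε / 2 := by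
        rwa [lintegral_add_left hg.measurable,
          lintegral_indicator_const (isClosed_tsupport g).measurableSet] at hu_le
      _ ≤ ∫⁻ x, g x ∂μ + ε := by
        rw [add_assoc]
        gcongr
        exact (add_le_add_left hδK.le _).trans_eq (ENNReal.add_halves ε)

end Insertion

section LTwo

variable {X 𝕜 : Type*} [MeasurableSpace X] [RCLike 𝕜] {μ : Measure X}

theorem integral_norm_mul_eq_inner (u : Lp 𝕜 2 μ) {g : X → ℝ} (hg : MemLp g 2 μ) :
    ∫ x, ‖u x‖ * g x ∂μ = inner ℝ (lipschitzWith_one_norm.compLp norm_zero u) (hg.toLp g) := by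
  rw [L2.inner_def]
  refine integral_congr_ae ?_
  filter_upwards [lipschitzWith_one_norm.coeFn_compLp norm_zero u, hg.coeFn_toLp] with x hu hg
  rw [hu, hg]
  exact mul_comm _ _

theorem integral_norm_mul_le (u : Lp 𝕜 2 μ) {g : X → ℝ} (hg : MemLp g 2 μ) :
    ∫ x, ‖u x‖ * g x ∂μ ≤ ‖hg.toLp g‖ * ‖u‖ := by
  rw [integral_norm_mul_eq_inner u hg, mul_comm]
  refine (real_inner_le_norm _ _).trans ?_
  gcongr
  simpa using lipschitzWith_one_norm.norm_compLp_le norm_zero u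

theorem integral_mul_eq_inner (u : Lp 𝕜 2 μ) {h : X → 𝕜} (hh : MemLp h 2 μ) :
    ∫ x, u x * h x ∂μ = inner 𝕜 (hh.star.toLp (star h)) u := by
  rw [L2.inner_def]
  refine integral_congr_ae ?_
  filter_upwards [hh.star.coeFn_toLp] with x hx
  simp [hx, RCLike.inner_apply]

end LTwo

section CompactlySupported

variable {X 𝕜 : Type*} [TopologicalSpace X] [MeasurableSpace X] [BorelSpace X] [RCLike 𝕜]
  {p : ℝ≥0∞} {μ : Measure X}

variable (𝕜 p μ) in
/-- The natural linear map `C_c(X, 𝕜) → Lᵖ(μ)` sending a function to its class, along which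
functionals on `C_c(X, 𝕜)` are extended to `Lᵖ(μ)`. -/
noncomputable def ccToLp [IsFiniteMeasureOnCompacts μ] : C_c(X, 𝕜) →ₗ[𝕜] Lp 𝕜 p μ where
  toFun φ := (φ.continuous.memLp_of_hasCompactSupport φ.hasCompactSupport).toLp φ
  map_add' _ _ := MemLp.toLp_add _ _
  map_smul' _ _ := MemLp.toLp_const_smul _ _

theorem coeFn_ccToLp [IsFiniteMeasureOnCompacts μ] (φ : C_c(X, 𝕜)) : ccToLp 𝕜 p μ φ =ᵐ[μ] φ :=
  (φ.continuous.memLp_of_hasCompactSupport φ.hasCompactSupport).coeFn_toLp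

theorem denseRange_ccToLp [LocallyCompactSpace X] [R1Space X] [NormalSpace X] [μ.Regular]
    [Fact (1 ≤ p)] (hp : p ≠ ∞) : DenseRange (ccToLp (X := X) 𝕜 p μ) := by
  refine fun u => EMetric.mem_closure_iff.2 fun r hr => ?_
  obtain ⟨δ, hδ, hδr⟩ := exists_between hr
  obtain ⟨φ, hφc, hφu, hφ, -⟩ :=
    (Lp.memLp u).exists_hasCompactSupport_eLpNorm_sub_le hp hδ.ne'
  refine ⟨_, ⟨⟨⟨φ, hφ⟩, hφc⟩, rfl⟩, ?_⟩
  rw [Lp.edist_def, eLpNorm_congr_ae ((ae_eq_refl _).sub (coeFn_ccToLp _))]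
  exact hφu.trans_lt hδr

theorem exists_memLp_forall_eq_integral [IsFiniteMeasureOnCompacts μ] (L : C_c(X, 𝕜) →ₗ[𝕜] 𝕜)
    {g : X → ℝ} (hg : MemLp g 2 μ) (hL : ∀ φ, ‖L φ‖ ≤ ∫ x, ‖φ x‖ * g x ∂μ) :
    ∃ h : X → 𝕜, StronglyMeasurable h ∧ MemLp h 2 μ ∧ ∀ φ, L φ = ∫ x, φ x * h x ∂μ := by
  have hbound (φ : C_c(X, 𝕜)) : ‖L φ‖ ≤ ‖hg.toLp g‖ * ‖ccToLp 𝕜 2 μ φ‖ := by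
    refine (hL φ).trans (le_trans (le_of_eq (integral_congr_ae ?_)) (integral_norm_mul_le _ hg))
    filter_upwards [coeFn_ccToLp (p := 2) φ] with x hx using by rw [hx]
  obtain ⟨F, -, hF⟩ := exists_strongDual_comp_eq (ccToLp 𝕜 2 μ) L (norm_nonneg _) hbound
  let u : Lp 𝕜 2 μ := (InnerProductSpace.toDual 𝕜 (Lp 𝕜 2 μ)).symm F
  refine ⟨fun x => star (u x), (Lp.stronglyMeasurable u).star, (Lp.memLp u).star, fun φ => ?_⟩
  calc L φ = inner 𝕜 u (ccToLp 𝕜 2 μ φ) := by rw [InnerProductSpace.toDual_symm_apply, hF]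
    _ = ∫ x, φ x * star (u x) ∂μ := by
      rw [L2.inner_def]
      refine integral_congr_ae ?_
      filter_upwards [coeFn_ccToLp (p := 2) φ] with x hx
      simp [hx, RCLike.inner_apply]

theorem norm_integral_mul_le_of_forall_compactlySupported [LocallyCompactSpace X] [R1Space X]
    [NormalSpace X] [μ.Regular] {h : X → 𝕜} {g : X → ℝ} (hh : MemLp h 2 μ) (hg : MemLp g 2 μ)
    (hle : ∀ φ : C_c(X, 𝕜), ‖∫ x, φ x * h x ∂μ‖ ≤ ∫ x, ‖φ x‖ * g x ∂μ)
    {f : X → 𝕜} (hf : MemLp f 2 μ) :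
    ‖∫ x, f x * h x ∂μ‖ ≤ ∫ x, ‖f x‖ * g x ∂μ := by
  have hae {v w : X → 𝕜} (hvw : v =ᵐ[μ] w) : (‖∫ x, v x * h x ∂μ‖ ≤ ∫ x, ‖v x‖ * g x ∂μ) ↔
      ‖∫ x, w x * h x ∂μ‖ ≤ ∫ x, ‖w x‖ * g x ∂μ := by
    rw [integral_congr_ae (hvw.mono fun x hx => congrArg (· * h x) hx),
      integral_congr_ae (hvw.mono fun x hx => congrArg (‖·‖ * g x) hx)]
  have hclosed : IsClosed {u : Lp 𝕜 2 μ | ‖∫ x, u x * h x ∂μ‖ ≤ ∫ x, ‖u x‖ * g x ∂μ} := by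
    simp only [integral_norm_mul_eq_inner _ hg, integral_mul_eq_inner _ hh]
    have := lipschitzWith_one_norm.continuous_compLp (E := 𝕜) (p := 2) (μ := μ) norm_zero
    exact isClosed_le (by fun_prop) (by fun_prop)
  exact (hae hf.coeFn_toLp).1 <|
    (denseRange_ccToLp (p := 2) ENNReal.ofNat_ne_top).induction_on (hf.toLp f) hclosed
      fun φ => (hae (coeFn_ccToLp φ)).2 (hle φ)

theorem norm_le_ae_of_norm_integral_mul_le [LocallyCompactSpace X] [R1Space X]
    [NormalSpace X] [μ.Regular] {h : X → 𝕜} {g : X → ℝ}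
    (hh : MemLp h 2 μ) (hg : MemLp g 2 μ) (hg0 : 0 ≤ g)
    (hle : ∀ φ : C_c(X, 𝕜), ‖∫ x, φ x * h x ∂μ‖ ≤ ∫ x, ‖φ x‖ * g x ∂μ) :
    ∀ᵐ x ∂μ, ‖h x‖ ≤ g x := by
  -- Testing against `star h` on `s`, which need not be continuous, turns `‖h‖²` into `h * star h`.
  have hset (s : Set X) (hs : MeasurableSet s) :
      ∫ x in s, ‖h x‖ * ‖h x‖ ∂μ ≤ ∫ x in s, ‖h x‖ * g x ∂μ := by
    have hsq : ∫ x, s.indicator (star h) x * h x ∂μ = ((∫ x in s, ‖h x‖ * ‖h x‖ ∂μ : ℝ) : 𝕜) := by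
      rw [← integral_ofReal, ← integral_indicator hs]
      congr with x
      by_cases hx : x ∈ s <;> simp [hx, RCLike.conj_mul, sq]
    have := norm_integral_mul_le_of_forall_compactlySupported hh hg hle (hh.star.indicator hs)
    calc ∫ x in s, ‖h x‖ * ‖h x‖ ∂μ = ‖∫ x, s.indicator (star h) x * h x ∂μ‖ := by
          rw [hsq, RCLike.norm_ofReal, abs_of_nonneg (integral_nonneg fun x => by positivity)]
      _ ≤ ∫ x, ‖s.indicator (star h) x‖ * g x ∂μ := this
      _ = ∫ x in s, ‖h x‖ * g x ∂μ := by
          rw [← integral_indicator hs]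
          congr with x
          by_cases hx : x ∈ s <;> simp [hx]
  filter_upwards [ae_le_of_forall_setIntegral_le (hh.norm.integrable_mul hh.norm)
    (hh.norm.integrable_mul hg) fun s hs _ => hset s hs] with x hx
  rcases (norm_nonneg (h x)).eq_or_lt with h0 | h0
  · exact h0 ▸ hg0 x
  · exact le_of_mul_le_mul_left hx h0

end CompactlySupported

namespace USCBanachBundle

variable {X : Type} [TopologicalSpace X] {Fib : X → Type} [∀ x, NormedAddCommGroup (Fib x)]
  [∀ x, NormedSpace ℂ (Fib x)] [∀ x, CompleteSpace (Fib x)] {B : USCBanachBundle X Fib}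
  {f g : ∀ x, Fib x}

section Sections

/-- Continuity at the point `x₀` of a section of the bundle `B`, as a map into the total space: the
local form of `IsContSection`, in which sections are added and rescaled. -/
def IsContSectionAt (B : USCBanachBundle X Fib) (f : ∀ x, Fib x) (x₀ : X) : Prop :=
  @ContinuousAt X ((x : X) × Fib x) inferInstance B.topTotal (fun x => ⟨x, f x⟩) x₀

theorem isContSection_iff_isContSectionAt :
    B.IsContSection f ↔ ∀ x₀, B.IsContSectionAt f x₀ :=
  @continuous_iff_continuousAt _ _ _ B.topTotal _

theorem IsContSectionAt.add {x₀ : X} (hf : B.IsContSectionAt f x₀)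
    (hg : B.IsContSectionAt g x₀) : B.IsContSectionAt (f + g) x₀ := by
  let _ := B.topTotal
  let pair (x : X) : {q : ((x : X) × Fib x) × ((x : X) × Fib x) // q.1.1 = q.2.1} :=
    ⟨(⟨x, f x⟩, ⟨x, g x⟩), rfl⟩
  have hpair : ContinuousAt pair x₀ := tendsto_subtype_rng.2 (hf.prodMk_nhds hg)
  exact (B.continuous_add.continuousAt (x := pair x₀)).comp hpair

theorem isContSectionAt_of_tendsto_norm {x₀ : X}
    (hf : Tendsto (fun x => ‖f x‖) (𝓝 x₀) (𝓝 0)) : B.IsContSectionAt f x₀ := by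
  have hf₀ : f x₀ = 0 := norm_eq_zero.1 (eq_of_tendsto_nhds (f := fun x => ‖f x‖) hf)
  simpa only [IsContSectionAt, ContinuousAt, hf₀] using B.tendsto_zero _ _ x₀ tendsto_id hf

theorem isContSection_zero : B.IsContSection 0 :=
  isContSection_iff_isContSectionAt.2 fun _ => isContSectionAt_of_tendsto_norm (by simp)

theorem IsContSection.add (hf : B.IsContSection f) (hg : B.IsContSection g) :
    B.IsContSection (f + g) := by
  rw [isContSection_iff_isContSectionAt] at *
  exact fun x₀ => (hf x₀).add (hg x₀)

theorem IsContSection.const_smul (hf : B.IsContSection f) (c : ℂ) : B.IsContSection (c • f) := by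
  let _ := B.topTotal
  exact (B.continuous_smul c).comp hf

theorem IsContSection.upperSemicontinuous_norm (hf : B.IsContSection f) :
    UpperSemicontinuous fun x => ‖f x‖ := by
  let _ := B.topTotal
  exact upperSemicontinuous_iff_isOpen_preimage.2 fun r => (B.isOpen_norm_lt r).preimage hf

theorem IsContSection.smul (hf : B.IsContSection f) {φ : X → ℂ} (hφ : Continuous φ) :
    B.IsContSection (φ • f) := by
  refine isContSection_iff_isContSectionAt.2 fun x₀ => ?_
  have hsmall : Tendsto (fun x => ‖((φ - fun _ => φ x₀) • f) x‖) (𝓝 x₀) (𝓝 0) := by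
    have hφ₀ : Tendsto (fun x => ‖φ x - φ x₀‖ * (‖f x₀‖ + 1)) (𝓝 x₀) (𝓝 0) := by
      have : Continuous fun x => ‖φ x - φ x₀‖ * (‖f x₀‖ + 1) := by fun_prop
      simpa using this.tendsto x₀
    refine squeeze_zero' (.of_forall fun x => norm_nonneg _) ?_ hφ₀
    filter_upwards [hf.upperSemicontinuous_norm x₀ _ (lt_add_one _)] with x hx
    simp only [Pi.smul_apply', Pi.sub_apply, norm_smul]
    gcongr
  have hsplit : φ • f = φ x₀ • f + (φ - fun _ => φ x₀) • f := by
    ext x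
    simp [sub_smul]
  rw [hsplit]
  exact (isContSection_iff_isContSectionAt.1 (hf.const_smul _) x₀).add
    (isContSectionAt_of_tendsto_norm hsmall)

theorem memGammaC_zero : B.MemGammaC 0 :=
  ⟨isContSection_zero, ∅, isCompact_empty, fun _ _ => rfl⟩

theorem MemGammaC.add (hf : B.MemGammaC f) (hg : B.MemGammaC g) : B.MemGammaC (f + g) := by
  obtain ⟨hf, K, hK, hfK⟩ := hf
  obtain ⟨hg, L, hL, hgL⟩ := hg
  refine ⟨hf.add hg, K ∪ L, hK.union hL, fun x hx => ?_⟩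
  rw [mem_union, not_or] at hx
  simp [hfK x hx.1, hgL x hx.2]

theorem MemGammaC.smul (hf : B.MemGammaC f) {φ : X → ℂ} (hφ : Continuous φ) :
    B.MemGammaC (φ • f) := by
  obtain ⟨hf, K, hK, hfK⟩ := hf
  exact ⟨hf.smul hφ, K, hK, fun x hx => by simp [hfK x hx]⟩

theorem MemGammaC.const_smul (hf : B.MemGammaC f) (c : ℂ) : B.MemGammaC (c • f) :=
  hf.smul continuous_const

theorem MemGammaC.exists_norm_le (hf : B.MemGammaC f) : ∃ M, ∀ x, ‖f x‖ ≤ M := by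
  obtain ⟨hf, K, hK, hfK⟩ := hf
  obtain ⟨M, hM⟩ := (hf.upperSemicontinuous_norm.upperSemicontinuousOn K).bddAbove_of_isCompact hK
  refine ⟨max M 0, fun x => ?_⟩
  by_cases hx : x ∈ K
  · exact (hM (mem_image_of_mem _ hx)).trans (le_max_left _ _)
  · simp [hfK x hx]

theorem MemGammaC.memGammaZero (hf : B.MemGammaC f) : B.MemGammaZero f := by
  obtain ⟨hf, K, hK, hfK⟩ := hf
  refine ⟨hf, fun ε hε => hK.of_isClosed_subset
    (hf.upperSemicontinuous_norm.isClosed_preimage ε) fun x hx => ?_⟩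
  by_contra hxK
  exact hε.not_ge (by simpa [hfK x hxK] using hx)

theorem MemGammaC.hasCompactSupport_norm [R1Space X] (hf : B.MemGammaC f) :
    HasCompactSupport fun x => ‖f x‖ := by
  obtain ⟨-, K, hK, hfK⟩ := hf
  exact .intro hK fun x hx => by simp [hfK x hx]

theorem MemGammaC.memLp_norm [R1Space X] [MeasurableSpace X] [OpensMeasurableSpace X]
    {μ : Measure X} [IsFiniteMeasureOnCompacts μ] (hf : B.MemGammaC f) (p : ℝ≥0∞) :
    MemLp (fun x => ‖f x‖) p μ := by
  obtain ⟨M, hM⟩ := hf.exists_norm_le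
  exact hf.hasCompactSupport_norm.memLp_of_bound
    hf.1.upperSemicontinuous_norm.measurable.aestronglyMeasurable M
    (.of_forall fun x => by simpa using hM x)

theorem MemGammaZero.exists_memGammaC_norm_sub_lt [LocallyCompactSpace X] [RegularSpace X]
    (hf : B.MemGammaZero f) {δ : ℝ} (hδ : 0 < δ) : ∃ g, B.MemGammaC g ∧ ∀ x, ‖f x - g x‖ < δ := by
  obtain ⟨ψ, hψK, -, hψc, hψ⟩ := exists_continuous_one_zero_of_isCompact (hf.2 δ hδ) isClosed_empty
    (disjoint_empty _)
  refine ⟨(fun x => (ψ x : ℂ)) • f,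
    ⟨hf.1.smul (by fun_prop), tsupport ψ, hψc, fun x hx => ?_⟩, fun x => ?_⟩
  · simp [image_eq_zero_of_notMem_tsupport hx]
  · by_cases hx : δ ≤ ‖f x‖
    · simpa [hψK hx] using hδ
    · calc ‖f x - (ψ x : ℂ) • f x‖ = ‖1 - ψ x‖ * ‖f x‖ := by
            rw [← Complex.norm_real, ← norm_smul]
            simp [sub_smul]
        _ ≤ 1 * ‖f x‖ := by
            gcongr
            exact abs_le.2 ⟨by linarith [(hψ x).2], by linarith [(hψ x).1]⟩
        _ < δ := by simpa using hx

theorem SeparableGammaZero.exists_countable_memGammaC [LocallyCompactSpace X] [RegularSpace X]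
    (hsep : B.SeparableGammaZero) :
    ∃ D : Set (∀ x, Fib x), D.Countable ∧ (∀ g ∈ D, B.MemGammaC g) ∧
      ∀ f, B.MemGammaZero f → ∀ ε : ℝ, 0 < ε → ∃ g ∈ D, ∀ x, ‖f x - g x‖ < ε := by
  obtain ⟨D, hD, hDmem, hDdense⟩ := hsep
  have := hD.to_subtype
  choose k hk hdk using fun p : D × ℕ =>
    (hDmem p.1 p.1.2).exists_memGammaC_norm_sub_lt (Nat.one_div_pos_of_nat (n := p.2) (α := ℝ))
  refine ⟨range k, countable_range k, forall_mem_range.2 hk, fun f hf ε hε => ?_⟩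
  obtain ⟨n, hn⟩ := exists_nat_one_div_lt (half_pos hε)
  obtain ⟨d, hd, hfd⟩ := hDdense f hf _ (half_pos hε)
  refine ⟨_, ⟨(⟨d, hd⟩, n), rfl⟩, fun x => ?_⟩
  calc ‖f x - k (⟨d, hd⟩, n) x‖ ≤ ‖f x - d x‖ + ‖d x - k (⟨d, hd⟩, n) x‖ :=
        norm_sub_le_norm_sub_add_norm_sub ..
    _ < ε / 2 + ε / 2 := add_lt_add (hfd x) ((hdk (⟨d, hd⟩, n) x).trans hn)
    _ = ε := add_halves ε

end Sections

section Density

variable {ν : (∀ x, Fib x) → ℂ}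

theorem IsGRM.map_zero (hν : B.IsGRM ν) : ν 0 = 0 := by
  simpa only [zero_smul, zero_mul] using! hν.2.1 0 0 memGammaC_zero

theorem IsGRM.bddAbove_norm (hν : B.IsGRM ν) {K : Set X} (hK : IsCompact K) (M : ℝ) :
    BddAbove {r | ∃ f, B.MemGammaC f ∧ (∀ x ∉ K, f x = 0) ∧ (∀ x, ‖f x‖ ≤ M) ∧ r = ‖ν f‖} := by
  -- Otherwise some `F n` in this set have `n + 1 < ‖ν (F n)‖`, and then `F n / (n + 1) → 0` in the
  -- inductive limit topology although `ν` of these sections stays away from `0`.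
  by_contra hunbdd
  rw [not_bddAbove_iff] at hunbdd
  choose r hr hrν using fun n : ℕ => hunbdd (n + 1)
  choose F hF hFK hFM hrF using hr
  let H (n : ℕ) : ∀ x, Fib x := ((n : ℂ) + 1)⁻¹ • F n
  have hscale (n : ℕ) : ‖((n : ℂ) + 1)⁻¹‖ = 1 / ((n : ℝ) + 1) := by
    rw [norm_inv, one_div]
    exact_mod_cast congrArg _ (Complex.norm_natCast (n + 1))
  have hunif : B.UnifTendsto H 0 := fun ε hε => by
    have hlim : Tendsto (fun n : ℕ => 1 / ((n : ℝ) + 1) * M) atTop (𝓝 0) := by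
      simpa using tendsto_one_div_add_atTop_nhds_zero_nat.mul_const M
    obtain ⟨N, hN⟩ := eventually_atTop.1 (hlim.eventually_lt_const hε)
    refine ⟨N, fun n hn x => lt_of_le_of_lt ?_ (hN n hn)⟩
    simp only [H, Pi.zero_apply, sub_zero, Pi.smul_apply, norm_smul, hscale]
    gcongr
    exact hFM n x
  have hlim : Tendsto (fun n => ‖ν (H n)‖) atTop (𝓝 0) := by
    simpa [hν.map_zero] using (hν.2.2 H 0 K (fun n => (hF n).const_smul _) memGammaC_zero hK
      (fun n x hx => by simp [H, hFK n x hx]) hunif).norm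
  refine absurd (ge_of_tendsto' hlim fun n => ?_) one_pos.not_ge
  calc (1 : ℝ) = 1 / (n + 1) * (n + 1) := by field_simp
    _ ≤ 1 / (n + 1) * ‖ν (F n)‖ := by
      gcongr
      exact (hrF n).symm ▸ (hrν n).le
    _ = ‖ν (H n)‖ := by rw [← hscale, ← norm_mul, ← hν.2.1 _ _ (hF n)]; rfl

variable [MeasurableSpace X] [BorelSpace X] {μ : Measure X}

theorem IsTotalVariation.enorm_le_lintegral (hμ : B.IsTotalVariation ν μ) (hν : B.IsGRM ν)
    (hf : B.MemGammaC f) (φ : C_c(X, ℝ≥0)) (hfφ : ∀ x, ‖f x‖ ≤ φ x) :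
    ‖ν f‖ₑ ≤ ∫⁻ x, φ x ∂μ := by
  have : IsFiniteMeasureOnCompacts μ := ⟨fun _ hK => hμ.1 _ hK⟩
  have hφc : HasCompactSupport fun x => (φ x : ℝ) :=
    φ.hasCompactSupport.comp_left (g := ((↑) : ℝ≥0 → ℝ)) rfl
  have hφ : Continuous fun x => (φ x : ℝ) := by fun_prop
  obtain ⟨M, hM⟩ := hφc.exists_bound_of_continuous hφ
  rw [lintegral_coe_eq_integral φ (hφ.integrable_of_hasCompactSupport hφc), ← ofReal_norm,
    hμ.2 _ hφ hφc fun x => (φ x).2]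
  refine ENNReal.ofReal_le_ofReal <|
    le_csSup ((hν.bddAbove_norm hφc M).mono ?_) ⟨f, hf, hfφ, rfl⟩
  rintro r ⟨k, hk, hkφ, rfl⟩
  refine ⟨k, hk, fun x hx => ?_, fun x => (hkφ x).trans ((le_abs_self _).trans (hM x)), rfl⟩
  simpa [image_eq_zero_of_notMem_tsupport hx] using hkφ x

theorem IsTotalVariation.norm_le_integral_norm [R1Space X] [LocallyCompactSpace X] [μ.Regular]
    (hμ : B.IsTotalVariation ν μ) (hν : B.IsGRM ν) (hf : B.MemGammaC f) :
    ‖ν f‖ ≤ ∫ x, ‖f x‖ ∂μ := by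
  have hint : Integrable (fun x => ‖f x‖) μ := memLp_one_iff_integrable.1 (hf.memLp_norm 1)
  rw [← ENNReal.ofReal_le_ofReal_iff (by positivity), ofReal_norm,
    ofReal_integral_eq_lintegral_ofReal hint (.of_forall fun _ => norm_nonneg _)]
  refine le_of_forall_pos_le_add fun ε hε => ?_
  obtain ⟨φ, hfφ, hφ⟩ := exists_compactlySupported_ge_lintegral_le (μ := μ)
    (ENNReal.continuous_ofReal.comp_upperSemicontinuous hf.1.upperSemicontinuous_norm
      ENNReal.ofReal_mono)
    (fun _ => ENNReal.ofReal_ne_top) (hf.hasCompactSupport_norm.comp_left ENNReal.ofReal_zero)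
    hε.ne'
  exact (hμ.enorm_le_lintegral hν hf φ fun x => ENNReal.ofReal_le_coe.1 (hfφ x)).trans hφ

/-- The graph of the relation that `h` is the density of `f ∈ Γ_c(X;𝔅)`: the functional
`φ ↦ ν (φ f)` on `C_c(X)` is integration against `h μ`. Recording it as a subspace makes linear
combinations of densities available without choosing `h` linearly in `f`. Square integrability of
`h` is part of the definition, since densities are produced and compared in `L²(μ)`. -/
def densityGraph (hν : B.IsGRM ν) (μ : Measure X) [IsFiniteMeasureOnCompacts μ] :
    Submodule ℂ ((∀ x, Fib x) × (X → ℂ)) where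
  carrier := {p | B.MemGammaC p.1 ∧ MemLp p.2 2 μ ∧
    ∀ φ : C_c(X, ℂ), ν ((φ : X → ℂ) • p.1) = ∫ x, φ x * p.2 x ∂μ}
  zero_mem' := ⟨memGammaC_zero, .zero, fun φ => by simpa using hν.map_zero⟩
  add_mem' := by
    rintro ⟨f, h⟩ ⟨f', h'⟩ ⟨hf, hh, hfh⟩ ⟨hf', hh', hfh'⟩
    refine ⟨hf.add hf', hh.add hh', fun φ => ?_⟩
    have hφ : MemLp φ 2 μ := φ.continuous.memLp_of_hasCompactSupport φ.hasCompactSupport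
    calc ν ((φ : X → ℂ) • (f + f')) = ν ((φ : X → ℂ) • f) + ν ((φ : X → ℂ) • f') := by
          rw [smul_add]
          exact hν.1 _ _ (hf.smul φ.continuous) (hf'.smul φ.continuous)
      _ = ∫ x, φ x * (h + h') x ∂μ := by
          rw [hfh φ, hfh' φ]
          refine (integral_add (hφ.integrable_mul hh) (hφ.integrable_mul hh')).symm.trans ?_
          simp [mul_add]
  smul_mem' := by
    rintro c ⟨f, h⟩ ⟨hf, hh, hfh⟩
    refine ⟨hf.const_smul c, hh.const_smul c, fun φ => ?_⟩
    calc ν ((φ : X → ℂ) • c • f) = c * ν ((φ : X → ℂ) • f) := by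
          rw [smul_comm]
          exact hν.2.1 c _ (hf.smul φ.continuous)
      _ = ∫ x, φ x * (c • h) x ∂μ := by
          rw [hfh, ← integral_const_mul]
          simp [mul_left_comm]

theorem exists_mem_densityGraph [R1Space X] [LocallyCompactSpace X] [μ.Regular]
    (hν : B.IsGRM ν) (hμ : B.IsTotalVariation ν μ) (hf : B.MemGammaC f) :
    ∃ h, StronglyMeasurable h ∧ (f, h) ∈ densityGraph hν μ := by
  let L : C_c(X, ℂ) →ₗ[ℂ] ℂ :=
    { toFun φ := ν ((φ : X → ℂ) • f)
      map_add' φ ψ := by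
        rw [CompactlySupportedContinuousMap.coe_add, add_smul]
        exact hν.1 _ _ (hf.smul φ.continuous) (hf.smul ψ.continuous)
      map_smul' c φ := by
        rw [CompactlySupportedContinuousMap.coe_smul, smul_assoc]
        exact hν.2.1 c _ (hf.smul φ.continuous) }
  have hL (φ : C_c(X, ℂ)) : ‖L φ‖ ≤ ∫ x, ‖φ x‖ * ‖f x‖ ∂μ := by
    simpa [L, norm_smul] using hμ.norm_le_integral_norm hν (hf.smul φ.continuous)
  obtain ⟨h, hm, hh, hLh⟩ := exists_memLp_forall_eq_integral L (hf.memLp_norm 2) hL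
  exact ⟨h, hm, hf, hh, hLh⟩

theorem norm_le_ae_of_mem_densityGraph [R1Space X] [NormalSpace X] [LocallyCompactSpace X]
    [μ.Regular] {hν : B.IsGRM ν} (hμ : B.IsTotalVariation ν μ) {h : X → ℂ}
    (hfh : (f, h) ∈ densityGraph hν μ) :
    ∀ᵐ x ∂μ, ‖h x‖ ≤ ‖f x‖ := by
  obtain ⟨hf, hh, hfh⟩ := hfh
  refine norm_le_ae_of_norm_integral_mul_le hh (hf.memLp_norm 2)
    (fun _ => norm_nonneg _) fun φ => ?_
  simpa [norm_smul, hfh] using hμ.norm_le_integral_norm hν (hf.smul φ.continuous)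

theorem eq_integral_of_mem_densityGraph [R1Space X] [NormalSpace X] [LocallyCompactSpace X]
    [μ.Regular] {hν : B.IsGRM ν} (hμ : B.IsTotalVariation ν μ) {h : X → ℂ}
    (hfh : (f, h) ∈ densityGraph hν μ) :
    ν f = ∫ x, h x ∂μ := by
  obtain ⟨K, hK, hfK : ∀ x ∉ K, f x = 0⟩ := hfh.1.2
  obtain ⟨ψ, hψK, -, hψc, -⟩ := exists_continuous_one_zero_of_isCompact hK isClosed_empty
    (disjoint_empty K)
  let φ : C_c(X, ℂ) := ⟨⟨fun x => ψ x, by fun_prop⟩, hψc.comp_left Complex.ofReal_zero⟩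
  have hφK (x : X) (hx : x ∈ K) : φ x = 1 := by simp [φ, hψK hx]
  calc ν f = ν ((φ : X → ℂ) • f) := by
        congr with x
        by_cases hx : x ∈ K
        · simp [hφK x hx]
        · simp [hfK x hx]
    _ = ∫ x, φ x * h x ∂μ := hfh.2.2 φ
    _ = ∫ x, h x ∂μ := by
        refine integral_congr_ae ?_
        filter_upwards [norm_le_ae_of_mem_densityGraph hμ hfh] with x hx
        by_cases hxK : x ∈ K
        · simp [hφK x hxK]
        · have hhx : h x = 0 := by simpa [hfK x hxK] using hx
          simp [hhx]

theorem mem_densityGraph_congr [IsFiniteMeasureOnCompacts μ] {hν : B.IsGRM ν} {h h' : X → ℂ}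
    (hh : h =ᵐ[μ] h') (hfh : (f, h) ∈ densityGraph hν μ) : (f, h') ∈ densityGraph hν μ := by
  refine ⟨hfh.1, hfh.2.1.ae_eq hh, fun φ => (hfh.2.2 φ).trans (integral_congr_ae ?_)⟩
  filter_upwards [hh] with x hx using by simp [hx]

theorem exists_strongDual_ae_eq_of_mem_densityGraph [R1Space X] [NormalSpace X]
    [LocallyCompactSpace X] [μ.Regular] {hν : B.IsGRM ν} (hμ : B.IsTotalVariation ν μ)
    {ι : Type*} [Countable ι] {g : ι → ∀ x, Fib x} {h : ι → X → ℂ} (hm : ∀ i, Measurable (h i))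
    (hgh : ∀ i, (g i, h i) ∈ densityGraph hν μ) :
    ∃ ε : ∀ x, StrongDual ℂ (Fib x), (∀ x, ‖ε x‖ ≤ 1) ∧
      ∀ i, Measurable (fun x => ε x (g i x)) ∧ (fun x => ε x (g i x)) =ᵐ[μ] h i := by
  refine exists_strongDual_ae_eq hm fun c => ?_
  have hmem : (Finsupp.linearCombination ℂ g c, Finsupp.linearCombination ℂ h c) ∈
      densityGraph hν μ := by
    convert (densityGraph hν μ).sum_mem fun i (_ : i ∈ c.support) =>
      Submodule.smul_mem _ (c i) (hgh i)
    · simp only [Finsupp.linearCombination_apply, Finsupp.sum, Prod.fst_sum, Prod.smul_mk]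
    · simp only [Finsupp.linearCombination_apply, Finsupp.sum, Prod.snd_sum, Prod.smul_mk]
  filter_upwards [norm_le_ae_of_mem_densityGraph hμ hmem] with x hx
  simpa [Finsupp.linearCombination_apply, Finsupp.sum] using hx

theorem strongDual_apply_ae_eq_of_mem_densityGraph [R1Space X] [NormalSpace X]
    [LocallyCompactSpace X] [μ.Regular] {hν : B.IsGRM ν} (hμ : B.IsTotalVariation ν μ)
    {ε : ∀ x, StrongDual ℂ (Fib x)} (hε : ∀ x, ‖ε x‖ ≤ 1) {D : Set (∀ x, Fib x)}
    (hD : ∀ g ∈ D, (g, fun x => ε x (g x)) ∈ densityGraph hν μ)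
    (hf : ∀ δ > 0, ∃ g ∈ D, ∀ x, ‖f x - g x‖ < δ) {h : X → ℂ}
    (hfh : (f, h) ∈ densityGraph hν μ) : (fun x => ε x (f x)) =ᵐ[μ] h := by
  refine ae_eq_of_forall_ae_dist_le fun δ hδ => ?_
  obtain ⟨g, hg, hfg⟩ := hf (δ / 2) (half_pos hδ)
  filter_upwards [norm_le_ae_of_mem_densityGraph hμ (Submodule.sub_mem _ hfh (hD g hg))] with x hx
  calc dist (ε x (f x)) (h x) ≤ ‖ε x (f x) - ε x (g x)‖ + ‖h x - ε x (g x)‖ := by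
        simpa only [dist_eq_norm] using dist_triangle_right (ε x (f x)) (h x) (ε x (g x))
    _ ≤ δ / 2 + δ / 2 := by
      rw [← map_sub]
      gcongr
      · exact ((ε x).le_of_opNorm_le (hε x) _).trans (by simpa using (hfg x).le)
      · exact hx.trans (hfg x).le
    _ = δ := add_halves δ

end Density

theorem exists_disintegration_of_grm_general [R1Space X] [NormalSpace X] [LocallyCompactSpace X]
    [MeasurableSpace X] [BorelSpace X] (B : USCBanachBundle X Fib) (hsep : B.SeparableGammaZero)
    (ν : (∀ x, Fib x) → ℂ) (hν : B.IsGRM ν) (μν : Measure X) [μν.Regular]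
    (hμν : B.IsTotalVariation ν μν) :
    ∃ ε : (x : X) → (Fib x →L[ℂ] ℂ),
      (∀ x, ‖ε x‖ ≤ 1) ∧
      (∀ f, B.MemGammaC f →
        Measurable (fun x => ε x (f x)) ∧
        (∃ M : ℝ, ∀ x, ‖ε x (f x)‖ ≤ M) ∧
        (∃ K : Set X, IsCompact K ∧ ∀ x ∉ K, ε x (f x) = 0)) ∧
      (∀ f, B.MemGammaC f → ν f = ∫ x, ε x (f x) ∂μν) := by
  obtain ⟨D, hD, hDc, hdense⟩ := hsep.exists_countable_memGammaC
  have := hD.to_subtype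
  choose h hm hh using fun g : D => exists_mem_densityGraph hν hμν (hDc g g.2)
  obtain ⟨ε, hε, hεD⟩ :=
    exists_strongDual_ae_eq_of_mem_densityGraph hμν (fun g => (hm g).measurable) hh
  refine ⟨ε, hε, fun f hf => ⟨?_, ?_, ?_⟩, fun f hf => ?_⟩
  · exact measurable_strongDual_apply_of_forall_exists hε (fun g hg => (hεD ⟨g, hg⟩).1)
      (hdense f hf.memGammaZero)
  · obtain ⟨M, hM⟩ := hf.exists_norm_le
    exact ⟨M, fun x => ((ε x).le_of_opNorm_le (hε x) _).trans (by simpa using hM x)⟩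
  · obtain ⟨-, K, hK, hfK⟩ := hf
    exact ⟨K, hK, fun x hx => by rw [hfK x hx, map_zero]⟩
  · obtain ⟨h, -, hfh⟩ := exists_mem_densityGraph hν hμν hf
    rw [eq_integral_of_mem_densityGraph hμν hfh]
    exact integral_congr_ae (strongDual_apply_ae_eq_of_mem_densityGraph hμν hε
      (fun g hg => mem_densityGraph_congr (hεD ⟨g, hg⟩).2.symm (hh ⟨g, hg⟩))
      (hdense f hf.memGammaZero) hfh).symm

end USCBanachBundle

/-- Proposition 3.3 of the paper, Dinculeanu-type disintegration: if
`Γ₀(G;𝔅)` is separable and `ν` is a generalized Radon measure with total variation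
`|ν| = μν`, then there are functionals `ε_x ∈ B(x)*` of norm at most one such that
`x ↦ ε_x (f x)` is a bounded Borel function vanishing off a compact set for every
`f ∈ Γ_c(G;𝔅)`, and `ν f = ∫ ε_x (f x) d|ν|(x)` for all such `f`. -/
theorem USCBanachBundle.exists_disintegration_of_grm
    {G : Type} [TopologicalSpace G] [SecondCountableTopology G]
    [LocallyCompactSpace G] [T2Space G]
    [MeasurableSpace G] [BorelSpace G]
    {Fib : G → Type}
    [∀ x, NormedAddCommGroup (Fib x)] [∀ x, NormedSpace ℂ (Fib x)]
    [∀ x, CompleteSpace (Fib x)]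
    (B : USCBanachBundle G Fib)
    (hsep : B.SeparableGammaZero)
    (ν : (∀ x, Fib x) → ℂ) (hν : B.IsGRM ν)
    (μν : Measure G) (hμν : B.IsTotalVariation ν μν) :
    ∃ ε : (x : G) → (Fib x →L[ℂ] ℂ),
      (∀ x, ‖ε x‖ ≤ 1) ∧
      (∀ f, B.MemGammaC f →
        Measurable (fun x => ε x (f x)) ∧
        (∃ M : ℝ, ∀ x, ‖ε x (f x)‖ ≤ M) ∧
        (∃ K : Set G, IsCompact K ∧ ∀ x ∉ K, ε x (f x) = 0)) ∧
      (∀ f, B.MemGammaC f → ν f = ∫ x, ε x (f x) ∂μν) := by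
  have : IsFiniteMeasureOnCompacts μν := ⟨fun _ hK => hμν.1 _ hK⟩
  exact exists_disintegration_of_grm_general B hsep ν hν μν hμν
end

section
/- (Tietze Extension Theorem for upper semicontinuous Banach bundles.) Let p : 𝔅 → G be an upper semicontinuous Banach bundle over a second countable locally compact Hausdorff space G (with enough sections), and let Y ⊆ G be a closed subset. If g : Y → 𝔅 is continuous with p(g(y)) = y for all y ∈ Y and g has compact support (a compactly supported continuous section of the restricted bundle 𝔅|_Y), then there exists f ∈ Γ_c(G;𝔅) such that f(y) = g(y) for all y ∈ Y. -/
open MeasureTheory Filter Topology Set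

/-!
Let `C` be compact. The continuous sections bounded on `X` form a Banach space, and restricting
them to `C` is a bounded linear map into the bounded sections over `C`. Gluing local sections with
a partition of unity shows that every continuous section over `C` lies in the closure of the range.
A section of norm `< M` on `C` has norm `< M` on a neighbourhood of `C`, by upper semicontinuity,
so cutting it off there shows that every `h` in the range has a preimage of norm at most `2 ‖h‖`.
By the closed-range argument behind the open mapping theorem, the range is then closed, hence
contains every continuous section over `C`.

For a closed set `Y` and a section `g` over `Y` supported in a compact set `K`, let `χ` be a
compactly supported bump function equal to `1` on `K`, extend `g` from `Y ∩ tsupport χ`, and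
multiply by `χ`.
-/

open scoped ENNReal

namespace USCBanachBundle

variable {X : Type} [TopologicalSpace X] {Fib : X → Type}
  [∀ x, NormedAddCommGroup (Fib x)] [∀ x, NormedSpace ℂ (Fib x)]
  [∀ x, CompleteSpace (Fib x)] {B : USCBanachBundle X Fib}

section ContinuousAlong

variable {Z : Type*} [TopologicalSpace Z] {a : Z → X} {s t : ∀ z, Fib (a z)}

/-- `s` is a continuous lift of the map `a` to the total space, that is, a continuous section of
the pullback of `B` along `a`. The sections of `B` over a subset are the case `a = Subtype.val`,
and the global sections are the case `a = fun x => x`. -/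
def ContinuousAlong (B : USCBanachBundle X Fib) (a : Z → X) (s : ∀ z, Fib (a z)) : Prop :=
  @Continuous Z ((x : X) × Fib x) inferInstance B.topTotal fun z => ⟨a z, s z⟩

theorem isContSection_iff_continuousAlong {f : ∀ x, Fib x} :
    B.IsContSection f ↔ B.ContinuousAlong (fun x => x) f :=
  Iff.rfl

theorem tendsto_add_s11 {ι : Type*} {l : Filter ι} {b : ι → X} {u v : ∀ i, Fib (b i)} {x : X}
    {u₀ v₀ : Fib x}
    (hu : Tendsto (fun i => (⟨b i, u i⟩ : (x : X) × Fib x)) l (@nhds _ B.topTotal ⟨x, u₀⟩))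
    (hv : Tendsto (fun i => (⟨b i, v i⟩ : (x : X) × Fib x)) l (@nhds _ B.topTotal ⟨x, v₀⟩)) :
    Tendsto (fun i => (⟨b i, u i + v i⟩ : (x : X) × Fib x)) l
      (@nhds _ B.topTotal ⟨x, u₀ + v₀⟩) := by
  let := B.topTotal
  have hpair : Tendsto
      (fun i => (⟨(⟨b i, u i⟩, ⟨b i, v i⟩), rfl⟩ :
        { q : ((x : X) × Fib x) × ((x : X) × Fib x) // q.1.1 = q.2.1 }))
      l (𝓝 ⟨(⟨x, u₀⟩, ⟨x, v₀⟩), rfl⟩) :=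
    tendsto_subtype_rng.2 (hu.prodMk_nhds hv)
  exact (B.continuous_add.tendsto _).comp hpair

namespace ContinuousAlong

theorem comp {W : Type*} [TopologicalSpace W] (hs : B.ContinuousAlong a s) {b : W → Z}
    (hb : Continuous b) : B.ContinuousAlong (fun w => a (b w)) fun w => s (b w) := by
  let := B.topTotal
  exact Continuous.comp hs hb

theorem continuous_base (hs : B.ContinuousAlong a s) : Continuous a := by
  let := B.topTotal
  exact B.continuous_proj.comp hs

theorem upperSemicontinuous_norm (hs : B.ContinuousAlong a s) :
    UpperSemicontinuous fun z => ‖s z‖ := by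
  let := B.topTotal
  exact upperSemicontinuous_iff_isOpen_preimage.2 fun r => (B.isOpen_norm_lt r).preimage hs

theorem memℓp_infty [CompactSpace Z] (hs : B.ContinuousAlong a s) : Memℓp s ∞ := by
  refine _root_.memℓp_infty ?_
  simpa using (hs.upperSemicontinuous_norm.upperSemicontinuousOn univ).bddAbove_of_isCompact
    isCompact_univ

theorem add (hs : B.ContinuousAlong a s) (ht : B.ContinuousAlong a t) :
    B.ContinuousAlong a fun z => s z + t z := by
  let := B.topTotal
  exact continuous_iff_continuousAt.2 fun z =>
    tendsto_add_s11 (Continuous.tendsto hs z) (Continuous.tendsto ht z)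

theorem const_smul (hs : B.ContinuousAlong a s) (c : ℂ) :
    B.ContinuousAlong a fun z => c • s z := by
  let := B.topTotal
  exact (B.continuous_smul c).comp hs

theorem sub (hs : B.ContinuousAlong a s) (ht : B.ContinuousAlong a t) :
    B.ContinuousAlong a fun z => s z - t z := by
  simpa [sub_eq_add_neg] using hs.add (ht.const_smul (-1))

end ContinuousAlong

theorem continuousAlong_zero {Z : Type} [TopologicalSpace Z] {a : Z → X} (ha : Continuous a) :
    B.ContinuousAlong a fun _ => 0 := by
  let := B.topTotal
  exact continuous_iff_continuousAt.2 fun z => B.tendsto_zero _ _ _ (ha.tendsto z) (by simp)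

theorem continuousAlong_of_locally_approx {Z : Type} [TopologicalSpace Z] {a : Z → X}
    {s : ∀ z, Fib (a z)}
    (happrox : ∀ z₀, ∀ ε > 0, ∃ t, B.ContinuousAlong a t ∧ ∀ᶠ z in 𝓝 z₀, ‖s z - t z‖ < ε) :
    B.ContinuousAlong a s := by
  let := B.topTotal
  refine continuous_iff_continuousAt.2 fun z₀ => ?_
  have ha : Continuous a :=
    let ⟨_, ht, _⟩ := happrox z₀ 1 one_pos
    ht.continuous_base
  obtain ⟨f, hf, hfz₀⟩ := B.enough_sections (a z₀) (s z₀)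
  have hfa : B.ContinuousAlong a fun z => f (a z) :=
    (isContSection_iff_continuousAlong.1 hf).comp ha
  have hnorm : Tendsto (fun z => ‖s z - f (a z)‖) (𝓝 z₀) (𝓝 0) := by
    refine tendsto_order.2 ⟨fun r hr => .of_forall fun z => hr.trans_le (norm_nonneg _),
      fun ε hε => ?_⟩
    obtain ⟨t, ht, hst⟩ := happrox z₀ (ε / 2) (half_pos hε)
    have htf : ∀ᶠ z in 𝓝 z₀, ‖t z - f (a z)‖ < ε / 2 :=
      (ht.sub hfa).upperSemicontinuous_norm z₀ _ <| by
        simpa only [hfz₀, norm_sub_rev (t z₀)] using hst.self_of_nhds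
    filter_upwards [hst, htf] with z hstz htfz
    linarith [norm_sub_le_norm_sub_add_norm_sub (s z) (t z) (f (a z))]
  have hdiff : Tendsto (fun z => (⟨a z, s z - f (a z)⟩ : (x : X) × Fib x)) (𝓝 z₀)
      (𝓝 ⟨a z₀, 0⟩) :=
    B.tendsto_zero _ _ _ (ha.tendsto z₀) hnorm
  simpa [ContinuousAt, hfz₀] using tendsto_add_s11 hdiff (Continuous.tendsto hfa z₀)

namespace ContinuousAlong

variable {Z : Type} [TopologicalSpace Z] {a : Z → X} {s : ∀ z, Fib (a z)}

theorem smul (hs : B.ContinuousAlong a s) {φ : Z → ℂ} (hφ : Continuous φ) :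
    B.ContinuousAlong a fun z => φ z • s z := by
  refine continuousAlong_of_locally_approx fun z₀ ε hε =>
    ⟨fun z => φ z₀ • s z, hs.const_smul _, ?_⟩
  have hbound : ∀ᶠ z in 𝓝 z₀, ‖s z‖ < ‖s z₀‖ + 1 :=
    hs.upperSemicontinuous_norm z₀ _ (lt_add_one _)
  have hsmall : ∀ᶠ z in 𝓝 z₀, ‖φ z - φ z₀‖ * (‖s z₀‖ + 1) < ε := by
    have hcont : Continuous fun z => ‖φ z - φ z₀‖ * (‖s z₀‖ + 1) := by fun_prop
    exact (hcont.tendsto z₀).eventually_lt_const (by simpa using hε)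
  filter_upwards [hbound, hsmall] with z hz hφz
  calc ‖φ z • s z - φ z₀ • s z‖ = ‖φ z - φ z₀‖ * ‖s z‖ := by rw [← sub_smul, norm_smul]
    _ ≤ ‖φ z - φ z₀‖ * (‖s z₀‖ + 1) := by gcongr
    _ < ε := hφz

theorem real_smul (hs : B.ContinuousAlong a s) {φ : Z → ℝ} (hφ : Continuous φ) :
    B.ContinuousAlong a fun z => φ z • s z := by
  simpa using hs.smul (Complex.continuous_ofReal.comp hφ)

end ContinuousAlong

theorem continuousAlong_sum {Z : Type} [TopologicalSpace Z] {a : Z → X} (ha : Continuous a)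
    {ι : Type*} (T : Finset ι) {s : ι → ∀ z, Fib (a z)}
    (hs : ∀ i ∈ T, B.ContinuousAlong a (s i)) :
    B.ContinuousAlong a fun z => ∑ i ∈ T, s i z := by
  classical
  induction T using Finset.induction_on with
  | empty => simpa using continuousAlong_zero ha
  | insert i T hi ih =>
    simp only [Finset.sum_insert hi]
    exact (hs i (T.mem_insert_self i)).add (ih fun j hj => hs j (Finset.mem_insert_of_mem hj))

end ContinuousAlong

section BoundedSections

/-- The Banach space of bounded continuous sections of `B` with the supremum norm, as a subspace
of the space `lp Fib ∞` of all bounded sections. -/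
def boundedSections (B : USCBanachBundle X Fib) : Submodule ℂ (lp Fib ∞) where
  carrier := {f | B.ContinuousAlong (fun x => x) f}
  zero_mem' := continuousAlong_zero continuous_id
  add_mem' hf hg := hf.add hg
  smul_mem' c _ hf := hf.const_smul c

theorem isClosed_boundedSections : IsClosed (B.boundedSections : Set (lp Fib ∞)) := by
  refine isClosed_of_closure_subset fun f hf => ?_
  refine continuousAlong_of_locally_approx fun _ ε hε => ?_
  obtain ⟨F, hF, hfF⟩ := Metric.mem_closure_iff.1 hf ε hε
  refine ⟨F, hF, .of_forall fun x => ?_⟩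
  rw [dist_eq_norm] at hfF
  exact (lp.norm_apply_le_norm ENNReal.top_ne_zero (f - F) x).trans_lt hfF

instance : CompleteSpace B.boundedSections :=
  isClosed_boundedSections.completeSpace_coe

/-- Restriction of bounded continuous sections to a subset `C`, as a bounded homomorphism for the
supremum norms. -/
noncomputable def restrictHom (B : USCBanachBundle X Fib) (C : Set X) :
    NormedAddGroupHom B.boundedSections (lp (fun y : C => Fib y) ∞) :=
  AddMonoidHom.mkNormedAddGroupHom
    { toFun F := ⟨fun y => F.1 y, memℓp_infty <|
        (memℓp_infty_iff.1 (lp.memℓp F.1)).mono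
          (range_comp_subset_range Subtype.val fun x => ‖F.1 x‖)⟩
      map_zero' := rfl
      map_add' _ _ := rfl } 1 fun F => by
    rw [one_mul]
    exact lp.norm_le_of_forall_le (norm_nonneg _) fun y =>
      lp.norm_apply_le_norm ENNReal.top_ne_zero F.1 y

@[simp]
theorem restrictHom_apply {C : Set X} (F : B.boundedSections) (y : C) :
    B.restrictHom C F y = F.1 y :=
  rfl

variable {C : Set X}

section CutOff

variable [LocallyCompactSpace X] [RegularSpace X]

theorem exists_boundedSections_eqOn (hC : IsCompact C) {F : ∀ x, Fib x}
    (hF : B.ContinuousAlong (fun x => x) F) {M : ℝ} (hM : 0 ≤ M) (hFM : ∀ y ∈ C, ‖F y‖ < M) :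
    ∃ F' : B.boundedSections, ‖F'‖ ≤ M ∧ ∀ y ∈ C, F'.1 y = F y := by
  have hopen : IsOpen {x | ‖F x‖ < M} :=
    upperSemicontinuous_iff_isOpen_preimage.1 hF.upperSemicontinuous_norm M
  obtain ⟨φ, hφ_one, hφ_zero, -, hφ⟩ := exists_continuous_one_zero_of_isCompact hC
    hopen.isClosed_compl (disjoint_compl_right_iff_subset.2 hFM)
  have hbound : ∀ x, ‖φ x • F x‖ ≤ M := by
    intro x
    by_cases hx : ‖F x‖ < M
    · calc ‖φ x • F x‖ = φ x * ‖F x‖ := by rw [norm_smul, Real.norm_of_nonneg (hφ x).1]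
        _ ≤ 1 * M := by gcongr; exact (hφ x).2
        _ = M := one_mul M
    · simpa [show φ x = 0 from hφ_zero hx] using hM
  refine ⟨⟨⟨fun x => φ x • F x, memℓp_infty ⟨M, forall_mem_range.2 hbound⟩⟩,
    hF.real_smul φ.continuous⟩, lp.norm_le_of_forall_le hM hbound, fun y hy => ?_⟩
  simp [show φ y = 1 from hφ_one hy]

theorem restrictHom_surjectiveOnWith_range (hC : IsCompact C) :
    (B.restrictHom C).SurjectiveOnWith (B.restrictHom C).range 2 := by
  rintro _ ⟨F, rfl⟩
  obtain hzero | hpos := (norm_nonneg (B.restrictHom C F)).eq_or_lt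
  · exact ⟨0, by simpa using (norm_eq_zero.1 hzero.symm).symm, by simp⟩
  have hFC : ∀ y ∈ C, ‖F.1 y‖ < 2 * ‖B.restrictHom C F‖ := fun y hy => calc
    ‖F.1 y‖ ≤ ‖B.restrictHom C F‖ :=
      lp.norm_apply_le_norm ENNReal.top_ne_zero (B.restrictHom C F) ⟨y, hy⟩
    _ < 2 * ‖B.restrictHom C F‖ := lt_two_mul_self hpos
  obtain ⟨F', hF'_norm, hF'⟩ := exists_boundedSections_eqOn hC F.2 (by positivity) hFC
  exact ⟨F', lp.ext <| funext fun y => hF' y y.2, hF'_norm⟩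

end CutOff

section Extension

variable [LocallyCompactSpace X] [T2Space X]

theorem exists_continuousAlong_norm_sub_lt (hC : IsCompact C) {g : ∀ y : C, Fib y}
    (hg : B.ContinuousAlong Subtype.val g) {ε : ℝ} (hε : 0 < ε) :
    ∃ F : ∀ x, Fib x, B.ContinuousAlong (fun x => x) F ∧ ∀ y : C, ‖F y - g y‖ < ε := by
  choose s hs hs_self using fun y : C => B.enough_sections y (g y)
  have hnear : ∀ y : C, ∃ U : Set X, IsOpen U ∧ (y : X) ∈ U ∧
      ∀ z : C, (z : X) ∈ U → ‖s y z - g z‖ < ε := by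
    intro y
    have hsy : B.ContinuousAlong Subtype.val fun z : C => s y z :=
      (isContSection_iff_continuousAlong.1 (hs y)).comp continuous_subtype_val
    have hev : ∀ᶠ z : C in 𝓝 y, ‖s y z - g z‖ < ε :=
      (hsy.sub hg).upperSemicontinuous_norm y ε (by simpa [hs_self] using hε)
    rw [nhds_subtype_eq_comap, eventually_comap] at hev
    obtain ⟨U, hUs, hU, hyU⟩ := eventually_nhds_iff.1 hev
    exact ⟨U, hU, hyU, fun z hz => hUs z hz z rfl⟩
  choose U hU hyU hUs using hnear
  obtain ⟨T, hT⟩ := hC.elim_finite_subcover U hU fun y hy => mem_iUnion.2 ⟨⟨y, hy⟩, hyU ⟨y, hy⟩⟩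
  obtain ⟨ρ, hρ, -⟩ := PartitionOfUnity.exists_isSubordinate_of_locallyFinite_t2space hC
    (fun i : T => U i) (fun i => hU i) (locallyFinite_of_finite _)
    (by simpa [iUnion_subtype] using hT)
  refine ⟨fun x => ∑ i : T, ρ i x • s i x, continuousAlong_sum continuous_id _ fun i _ =>
    ContinuousAlong.real_smul (hs i) (ρ i).continuous, fun y => ?_⟩
  have hball : ∑ᶠ i : T, ρ i y • s i y ∈ Metric.ball (g y) ε :=
    ρ.finsum_smul_mem_convex (g := fun i _ => s i y) y.2
      (fun i hi => mem_ball_iff_norm.2 (hUs i y (hρ i (subset_closure hi)))) (convex_ball _ _)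
  rwa [finsum_eq_sum_of_fintype, mem_ball_iff_norm] at hball

theorem mem_topologicalClosure_range_restrictHom (hC : IsCompact C)
    {g : lp (fun y : C => Fib y) ∞} (hg : B.ContinuousAlong Subtype.val g) :
    g ∈ (B.restrictHom C).range.topologicalClosure := by
  refine Metric.mem_closure_iff.2 fun ε hε => ?_
  obtain ⟨F, hF, hFg⟩ := exists_continuousAlong_norm_sub_lt hC hg (half_pos hε)
  have hFC : ∀ y ∈ C, ‖F y‖ < ‖g‖ + ε / 2 := fun y hy => calc
    ‖F y‖ ≤ ‖g ⟨y, hy⟩‖ + ‖F y - g ⟨y, hy⟩‖ := norm_le_norm_add_norm_sub' _ _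
    _ < ‖g‖ + ε / 2 :=
      add_lt_add_of_le_of_lt (lp.norm_apply_le_norm ENNReal.top_ne_zero g _) (hFg ⟨y, hy⟩)
  obtain ⟨F', -, hF'⟩ := exists_boundedSections_eqOn hC hF (by positivity) hFC
  refine ⟨B.restrictHom C F', ⟨F', rfl⟩, ?_⟩
  rw [dist_comm, dist_eq_norm]
  refine (lp.norm_le_of_forall_le (half_pos hε).le fun y => ?_).trans_lt (half_lt_self hε)
  simpa [hF' y y.2] using (hFg y).le

theorem exists_isContSection_extension (hC : IsCompact C) {g : ∀ y : C, Fib y}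
    (hg : B.ContinuousAlong Subtype.val g) :
    ∃ f : ∀ x, Fib x, B.IsContSection f ∧ ∀ y : C, f y = g y := by
  have := isCompact_iff_compactSpace.1 hC
  obtain ⟨F, hF, -⟩ := controlled_closure_of_complete two_pos one_pos
    (restrictHom_surjectiveOnWith_range hC) ⟨g, hg.memℓp_infty⟩
    (mem_topologicalClosure_range_restrictHom hC hg)
  exact ⟨F.1, F.2, fun y => congrFun (congrArg Subtype.val hF) y⟩

theorem tietze_extension_general {Y : Set X} (hY : IsClosed Y) {g : ∀ y : Y, Fib y}
    (hg : B.ContinuousAlong Subtype.val g)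
    (hg_supp : ∃ K : Set X, IsCompact K ∧ ∀ y : Y, (y : X) ∉ K → g y = 0) :
    ∃ f : ∀ x, Fib x, B.MemGammaC f ∧ ∀ y : Y, f y = g y := by
  obtain ⟨K, hK, hgK⟩ := hg_supp
  obtain ⟨χ, hχK, -, hχ_supp, -⟩ :=
    exists_continuous_one_zero_of_isCompact hK isClosed_empty (disjoint_empty K)
  obtain ⟨F, hF, hFg⟩ := exists_isContSection_extension (hχ_supp.inter_left hY)
    (hg.comp (continuous_inclusion inter_subset_left))
  refine ⟨fun x => χ x • F x, ⟨ContinuousAlong.real_smul hF χ.continuous, tsupport χ, hχ_supp,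
    fun x hx => by simp [image_eq_zero_of_notMem_tsupport hx]⟩, fun y => ?_⟩
  have hχg : χ y • g y = g y := by
    by_cases hy : (y : X) ∈ K
    · simp [show χ y = 1 from hχK hy]
    · simp [hgK y hy]
  by_cases hy : (y : X) ∈ tsupport χ
  · exact (congrArg (χ y • ·) (hFg ⟨y, y.2, hy⟩)).trans hχg
  · rw [← hχg]
    simp only [image_eq_zero_of_notMem_tsupport hy, zero_smul]

end Extension

end BoundedSections

end USCBanachBundle

/-- Proposition A.5 of the paper, Tietze extension: if `Y ⊆ G` is
closed and `g` is a compactly supported continuous section of the restricted bundle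
`𝔅|_Y`, then there is `f ∈ Γ_c(G;𝔅)` with `f y = g y` for every `y ∈ Y`. -/
theorem USCBanachBundle.tietze_extension
    {G : Type} [TopologicalSpace G] [SecondCountableTopology G]
    [LocallyCompactSpace G] [T2Space G]
    {Fib : G → Type}
    [∀ x, NormedAddCommGroup (Fib x)] [∀ x, NormedSpace ℂ (Fib x)]
    [∀ x, CompleteSpace (Fib x)]
    (B : USCBanachBundle G Fib)
    (Y : Set G) (hY : IsClosed Y)
    (g : ∀ y : Y, Fib (y : G))
    (hg_cont : @Continuous Y ((x : G) × Fib x) inferInstance B.topTotal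
      fun y => ⟨(y : G), g y⟩)
    (hg_supp : ∃ K : Set G, IsCompact K ∧ ∀ y : Y, (y : G) ∉ K → g y = 0) :
    ∃ f : ∀ x, Fib x, B.MemGammaC f ∧ ∀ y : Y, f (y : G) = g y :=
  tietze_extension_general hY hg_cont hg_supp
end
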